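/- Let C be an abelian monoidal category with unit 𝟙 whose tensor product is additive in each variable, let (P,d,μ_P) be a projective resolution of 𝟙, let Δ_P : P ⟶ P⊗P be a morphism of resolutions, and let f : P ⟶ 𝟙 be a degree n cocycle. If ψ_f and ψ'_f are both homotopy liftings of (f, Δ_P), then ψ_f ∼ ψ'_f, i.e. ψ_f − ψ'_f = ∂(s) for some degree (n−2) morphism s : P ⟶ P. -/

import Mathlib

/-!
STATEMENT 7: a homotopy lifting of `(f, Δ_P)` is unique up to homotopy
(first assertion of the paper's Remark 4.10).
-/

open CategoryTheory CategoryTheory.Limits CategoryTheory.MonoidalCategory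

universe v u

attribute [local instance] CategoryTheory.Abelian.hasFiniteBiproducts

variable {C : Type u} [Category.{v} C] [Abelian C] [MonoidalCategory C] [MonoidalPreadditive C]

/-- The degree `i` piece of the tensor product complex `E ⊗ F`:
`(E ⊗ F)_i = ⨁_{j+k=i} E_j ⊗ F_k`. -/
noncomputable abbrev tOb (E F : ℕ → C) (i : ℕ) : C :=
  ⨁ (fun j : Fin (i + 1) => E j.1 ⊗ F (i - j.1))

/-- The differential of the tensor product complex `P ⊗ P`; on the summand
`P_j ⊗ P_k` it is `d ⊗ 1 + (-1)^j (1 ⊗ d)`. -/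
noncomputable def tD (P : ℕ → C) (dP : ∀ i, P (i + 1) ⟶ P i) (i : ℕ) :
    tOb P P (i + 1) ⟶ tOb P P i :=
  biproduct.matrix fun (j : Fin (i + 2)) (k : Fin (i + 1)) =>
    (if h : j.1 = k.1 + 1 then
        eqToHom (show P j.1 ⊗ P (i + 1 - j.1) = P (k.1 + 1) ⊗ P (i - k.1) by
          rw [h, show i + 1 - (k.1 + 1) = i - k.1 by omega]) ≫ (dP k.1 ▷ P (i - k.1))
      else 0) +
    (if h : j.1 = k.1 then
        ((-1 : ℤ) ^ k.1) •
          (eqToHom (show P j.1 ⊗ P (i + 1 - j.1) = P k.1 ⊗ P ((i - k.1) + 1) by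
            rw [h, show i + 1 - k.1 = (i - k.1) + 1 by have := k.2; omega]) ≫
            (P k.1 ◁ dP (i - k.1)))
      else 0)

/-- Contraction of the first tensor factor against a degree `m` morphism `π : E ⟶ 𝟙`
(with single component `π : E_m ⟶ 𝟙`), composed with the left unitor:
this is `(π ⊗ 1_F) : (E ⊗ F)_i ⟶ F_j` for `i = j + m` (no Koszul sign since
`1_F` has degree `0`). -/
noncomputable def cFst (E F : ℕ → C) {m : ℕ} (π : E m ⟶ 𝟙_ C) (i j : ℕ) (h : i = j + m) :
    tOb E F i ⟶ F j :=
  biproduct.π (fun a : Fin (i + 1) => E a.1 ⊗ F (i - a.1)) ⟨m, by omega⟩ ≫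
    (π ▷ F (i - m)) ≫ (λ_ (F (i - m))).hom ≫ eqToHom (congrArg F (show i - m = j by omega))

/-- Contraction of the second tensor factor against a degree `m` morphism `π : F ⟶ 𝟙`
(with single component `π : F_m ⟶ 𝟙`), composed with the right unitor:
this is `(1_E ⊗ π) : (E ⊗ F)_i ⟶ E j` for `i = j + m`, including the Koszul sign
`(-1)^{m·j}` coming from moving `π` past `E_j`. -/
noncomputable def cSnd (E F : ℕ → C) {m : ℕ} (π : F m ⟶ 𝟙_ C) (i j : ℕ) (h : i = j + m) :
    tOb E F i ⟶ E j :=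
  ((-1 : ℤ) ^ (m * j)) •
    (biproduct.π (fun a : Fin (i + 1) => E a.1 ⊗ F (i - a.1)) ⟨j, by omega⟩ ≫
      (E j ◁ (eqToHom (congrArg F (show i - j = m by omega)) ≫ π)) ≫ (ρ_ (E j)).hom)

/-- The augmentation `(μ ⊗ μ) : (P ⊗ P)_0 = P_0 ⊗ P_0 ⟶ 𝟙 ⊗ 𝟙 ≅ 𝟙`. -/
noncomputable def tAug (P : ℕ → C) (μ : P 0 ⟶ 𝟙_ C) : tOb P P 0 ⟶ 𝟙_ C :=
  biproduct.π (fun a : Fin 1 => P a.1 ⊗ P (0 - a.1)) ⟨0, Nat.one_pos⟩ ≫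
    (μ ⊗ₘ μ) ≫ (λ_ (𝟙_ C)).hom

/-- A degree `n` morphism of (ℕ-indexed, bounded below) complexes: a family of
components `E_i ⟶ F_j` for `i = j + n`. -/
abbrev DH (E F : ℕ → C) (n : ℤ) :=
  ∀ i j : ℕ, (i : ℤ) = (j : ℤ) + n → (E i ⟶ F j)

/-- Pointwise subtraction of degree `n` morphisms. -/
instance {E F : ℕ → C} {n : ℤ} : Sub (DH E F n) :=
  ⟨fun f g i j h => f i j h - g i j h⟩

/-- `∂(f) = d_F ∘ f - (-1)^n f ∘ d_E` for a degree `n` morphism `f`. -/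
noncomputable def pdel {E F : ℕ → C} (dE : ∀ i, E (i + 1) ⟶ E i) (dF : ∀ i, F (i + 1) ⟶ F i)
    {n m : ℤ} (hm : m = n + 1) (f : DH E F n) : DH E F m :=
  fun i j h =>
    f i (j + 1) (by push_cast; omega) ≫ dF j -
      (n.negOnePow : ℤ) •
        (match i, h with
          | 0, _ => 0
          | (k + 1), h => dE k ≫ f k j (by push_cast at h; omega))

/-- The degree `n` morphism `(f ⊗ 1_P - 1_P ⊗ f) ∘ Δ : P ⟶ P` associated to a degree `n`
cochain `f : P_n ⟶ 𝟙` and a diagonal `Δ : P ⟶ P ⊗ P`. -/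
noncomputable def liftRHS (P : ℕ → C) (Δ : ∀ i, P i ⟶ tOb P P i) (n : ℕ) (f : P n ⟶ 𝟙_ C) :
    DH P P (n : ℤ) :=
  fun i j h => Δ i ≫ cFst P P f i j (by omega) - Δ i ≫ cSnd P P f i j (by omega)

/-- The degree `0` morphism `(μ ⊗ 1_P - 1_P ⊗ μ) ∘ Δ : P ⟶ P`. -/
noncomputable def counitRHS (P : ℕ → C) (μ : P 0 ⟶ 𝟙_ C) (Δ : ∀ i, P i ⟶ tOb P P i) :
    DH P P (0 : ℤ) :=
  fun i j h => Δ i ≫ cFst P P μ i j (by omega) - Δ i ≫ cSnd P P μ i j (by omega)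

/-- Two degree `k` morphisms `u, v : P ⟶ 𝟙` (identified with their single possibly
nonzero components `P_k ⟶ 𝟙`) are homotopic iff `u - v = ∂(s)` for a degree `k-1`
morphism `s : P ⟶ 𝟙`; unravelled, `u - v = (-1)^k (s ∘ d_{k-1})`. -/
def homotopicToUnit (P : ℕ → C) (dP : ∀ i, P (i + 1) ⟶ P i) (k : ℕ)
    (u v : P k ⟶ 𝟙_ C) : Prop :=
  if hk : k = 0 then u = v
  else ∃ s : P (k - 1) ⟶ 𝟙_ C,
    u - v = ((-1 : ℤ) ^ k) •
      (eqToHom (congrArg P (show k = (k - 1) + 1 by omega)) ≫ dP (k - 1) ≫ s)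

/-- `ψf` is a homotopy lifting of `(f, Δ)`:  `∂(ψ_f) = (f ⊗ 1_P - 1_P ⊗ f)Δ` and
`μ ∘ ψ_f ∼ (-1)^{n+1} f ∘ ψ` for some degree `-1` morphism `ψ : P ⟶ P` with
`∂(ψ) = (μ ⊗ 1_P - 1_P ⊗ μ)Δ`. -/
def IsHomotopyLifting (P : ℕ → C) (dP : ∀ i, P (i + 1) ⟶ P i) (μ : P 0 ⟶ 𝟙_ C)
    (Δ : ∀ i, P i ⟶ tOb P P i) (n : ℕ) (hn : 1 ≤ n) (f : P n ⟶ 𝟙_ C)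
    (ψf : DH P P ((n : ℤ) - 1)) : Prop :=
  pdel dP dP (show (n : ℤ) = ((n : ℤ) - 1) + 1 by ring) ψf = liftRHS P Δ n f ∧
  ∃ ψ : DH P P (-1 : ℤ),
    pdel dP dP (show (0 : ℤ) = (-1 : ℤ) + 1 by ring) ψ = counitRHS P μ Δ ∧
    homotopicToUnit P dP (n - 1)
      (ψf (n - 1) 0 (by omega) ≫ μ)
      (((-1 : ℤ) ^ (n + 1)) • (ψ (n - 1) n (by omega) ≫ f))

/-!
A chain map `g : P ⟶ Q` of any degree from a bounded below complex of projectives to a resolution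
`(Q, μ)` is null-homotopic as soon as `μ g` is: a null-homotopy of `μ g` extends `g` to a chain map
into the acyclic augmented complex, and a null-homotopy is built degree by degree by lifting.

Let `ψ`, `ψ'` be the degree `-1` morphisms accompanying `ψ_f`, `ψ'_f`. The difference `ψ - ψ'` is a
chain map, and `μ(ψ - ψ') = 0` for degree reasons, so `ψ - ψ' = ∂(w)`. As `f` is a cocycle,
`f ψ ∼ f ψ'`, and hence `μ ψ_f ∼ μ ψ'_f`. Since `∂(ψ_f) = ∂(ψ'_f)`, the first paragraph applies to
`ψ_f - ψ'_f`.
-/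

section Lifting

variable {D : Type*} [Category* D] [Abelian D] {T : D} {Q : ℕ → D}
  {dQ : ∀ i, Q (i + 1) ⟶ Q i} {μ : Q 0 ⟶ T}

/-- The augmented complex `⋯ ⟶ Q 1 ⟶ Q 0 ⟶ T ⟶ 0` is exact, i.e. `(Q, dQ, μ)` is a (not
necessarily projective) resolution of `T`. -/
structure IsResolution (dQ : ∀ i, Q (i + 1) ⟶ Q i) (μ : Q 0 ⟶ T) : Prop where
  d_comp_d : ∀ i, dQ (i + 1) ≫ dQ i = 0
  d_comp_augmentation : dQ 0 ≫ μ = 0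
  epi_augmentation : Epi μ
  exact_zero : (ShortComplex.mk (dQ 0) μ d_comp_augmentation).Exact
  exact_succ : ∀ i, (ShortComplex.mk (dQ (i + 1)) (dQ i) (d_comp_d i)).Exact

-- The cycle conditions on `r` stand inside the existential so that a recursion can choose lifts
-- before its right-hand sides are known to be cycles.
lemma IsResolution.exists_lift_of_projective (hQ : IsResolution dQ μ) {X : D} [Projective X]
    (t : X ⟶ T) (r : ∀ j, X ⟶ Q j) :
    ∃ s : ∀ j, X ⟶ Q j, s 0 ≫ μ = t ∧
      (r 0 ≫ μ = 0 → (∀ j, r (j + 1) ≫ dQ j = 0) → ∀ j, s (j + 1) ≫ dQ j = r j) := by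
  have := hQ.epi_augmentation
  by_cases hr : r 0 ≫ μ = 0 ∧ ∀ j, r (j + 1) ≫ dQ j = 0
  · have hlift : ∀ j, ∃ s : X ⟶ Q (j + 1), s ≫ dQ j = r j
      | 0 => ⟨_, hQ.exact_zero.liftFromProjective_comp _ hr.1⟩
      | j + 1 => ⟨_, (hQ.exact_succ j).liftFromProjective_comp _ (hr.2 j)⟩
    choose s hs using hlift
    exact ⟨fun | 0 => Projective.factorThru t μ | j + 1 => s j,
      Projective.factorThru_comp t μ, fun _ _ => hs⟩
  · exact ⟨fun | 0 => Projective.factorThru t μ | _ + 1 => 0,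
      Projective.factorThru_comp t μ, fun h₀ h => absurd ⟨h₀, h⟩ hr⟩

end Lifting

section Coboundary

variable {D : Type*} [Category* D] [Preadditive D] {P : ℕ → D}

/-- The differential of the cochain complex `Hom(P, Y)`, without Koszul sign. It takes a total
family `τ`, of which only the component `τ (k - 1)` matters, so that no subtraction on indices is
needed and the value at `k = 0` is `0`. -/
def coboundary (dP : ∀ i, P (i + 1) ⟶ P i) (Y : D) : ∀ k, (∀ i, P i ⟶ Y) →+ (P k ⟶ Y)
  | 0 => 0
  | k + 1 => (Preadditive.leftComp Y (dP k)).comp (Pi.evalAddMonoidHom _ k)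

variable {dP : ∀ i, P (i + 1) ⟶ P i} {Y Z : D}

@[simp]
lemma coboundary_zero (τ : ∀ i, P i ⟶ Y) : coboundary dP Y 0 τ = 0 := rfl

@[simp]
lemma coboundary_succ (k : ℕ) (τ : ∀ i, P i ⟶ Y) : coboundary dP Y (k + 1) τ = dP k ≫ τ k := rfl

lemma coboundary_comp (k : ℕ) (τ : ∀ i, P i ⟶ Y) (φ : Y ⟶ Z) :
    coboundary dP Y k τ ≫ φ = coboundary dP Z k fun i => τ i ≫ φ := by
  cases k <;> simp

lemma coboundary_coboundary (hP : ∀ i, dP (i + 1) ≫ dP i = 0) (k : ℕ) (τ : ∀ i, P i ⟶ Y) :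
    coboundary dP Y k (fun i => coboundary dP Y i τ) = 0 := by
  rcases k with _ | _ | k <;> simp [reassoc_of% hP]

lemma mem_range_coboundary_succ {k : ℕ} {u : P (k + 1) ⟶ Y} :
    u ∈ (coboundary dP Y (k + 1)).range ↔ ∃ s : P k ⟶ Y, u = dP k ≫ s := by
  simp only [AddMonoidHom.mem_range, coboundary_succ, eq_comm (a := u)]
  exact ((Function.surjective_eval (β := fun i => P i ⟶ Y) k).exists (p := (dP k ≫ · = u))).symm

lemma exists_forall_coboundary_eq {u : ∀ i, P i ⟶ Y}
    (hu : ∀ i, u i ∈ (coboundary dP Y i).range) : ∃ τ, ∀ i, coboundary dP Y i τ = u i := by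
  choose τ hτ using hu
  exact ⟨fun i => τ (i + 1) i, fun | 0 => hτ 0 | i + 1 => hτ (i + 1)⟩

end Coboundary

section NullHomotopy

variable {D : Type*} [Category* D] [Abelian D] {T : D} {P Q : ℕ → D}
  {dP : ∀ i, P (i + 1) ⟶ P i} {dQ : ∀ i, Q (i + 1) ⟶ Q i} {μ : Q 0 ⟶ T}

-- The hypotheses say that `(τ, g)` is a chain map to the augmented complex `Q ⟶ T`, for the sign
-- `ε`. Being total families, `g` and `s` collect the components of all degrees at once.
lemma IsResolution.exists_nullHomotopy (hQ : IsResolution dQ μ)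
    (hP : ∀ i, dP (i + 1) ≫ dP i = 0) (hproj : ∀ i, Projective (P i)) (ε : ℤ)
    (g : ∀ i j, P i ⟶ Q j) (τ : ∀ i, P i ⟶ T)
    (hg : ∀ i j, g i (j + 1) ≫ dQ j = ε • coboundary dP (Q j) i (g · j))
    (hτ : ∀ i, g i 0 ≫ μ = ε • coboundary dP T i τ) :
    ∃ s : ∀ i j, P i ⟶ Q j,
      ∀ i j, s i (j + 1) ≫ dQ j = g i j - ε • coboundary dP (Q j) i (s · j) := by
  choose lift lift_μ lift_d using fun i r => hQ.exists_lift_of_projective (X := P i) (τ i) r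
  let s : ∀ i j, P i ⟶ Q j := Nat.rec (lift 0 (g 0))
    fun i si => lift (i + 1) fun j => g (i + 1) j - ε • (dP i ≫ si j)
  let r (i j : ℕ) : P i ⟶ Q j := g i j - ε • coboundary dP (Q j) i (s · j)
  have hs : ∀ i, s i = lift i (r i)
    | 0 => by simp [s, r]
    | i + 1 => rfl
  have hsμ (i : ℕ) : s i 0 ≫ μ = τ i := by rw [hs, lift_μ]
  have hr₀ (i : ℕ) : r i 0 ≫ μ = 0 := by
    simp only [r, Preadditive.sub_comp, Preadditive.zsmul_comp, coboundary_comp, hsμ, hτ, sub_self]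
  have hr (i : ℕ) : ∀ j, r i (j + 1) ≫ dQ j = 0 := by
    induction i with
    | zero => simp [r, hg]
    | succ i ih =>
      intro j
      have hsi : s i (j + 1) ≫ dQ j = r i j := by rw [hs, lift_d i _ (hr₀ i) ih]
      have hdd : dP i ≫ coboundary dP (Q j) i (s · j) = 0 :=
        coboundary_coboundary hP (i + 1) (s · j)
      simp only [r, Preadditive.sub_comp, hg, coboundary_succ, Preadditive.zsmul_comp,
        Category.assoc, hsi, Preadditive.comp_sub, Preadditive.comp_zsmul, hdd, smul_zero,
        sub_zero, sub_self]
  exact ⟨s, fun i j => by rw [hs, lift_d i _ (hr₀ i) (hr i)]⟩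

end NullHomotopy

namespace DH

variable {D : Type*} [Category* D] [Abelian D] {P Q : ℕ → D} {n m : ℤ}
  {dP : ∀ i, P (i + 1) ⟶ P i} {dQ : ∀ i, Q (i + 1) ⟶ Q i}

/-- The family of all maps `P i ⟶ Q j` obtained from a degree `n` morphism by extending it by
zero to the pairs `i ≠ j + n`; it makes `∂` expressible without index proofs. -/
def extend (f : DH P Q n) (i j : ℕ) : P i ⟶ Q j :=
  if h : (i : ℤ) = j + n then f i j h else 0

lemma extend_apply (f : DH P Q n) {i j : ℕ} (h : (i : ℤ) = j + n) : f.extend i j = f i j h :=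
  dif_pos h

lemma extend_of_ne (f : DH P Q n) {i j : ℕ} (h : (i : ℤ) ≠ j + n) : f.extend i j = 0 :=
  dif_neg h

lemma sub_apply (f f' : DH P Q n) (i j : ℕ) (h : (i : ℤ) = j + n) :
    (f - f') i j h = f i j h - f' i j h := rfl

lemma extend_sub (f f' : DH P Q n) (i j : ℕ) :
    (f - f').extend i j = f.extend i j - f'.extend i j := by
  by_cases h : (i : ℤ) = j + n
  · simp only [extend_apply _ h, sub_apply]
  · simp only [extend_of_ne _ h, sub_zero]

lemma pdel_eq_extend (hm : m = n + 1) (f : DH P Q n) (i j : ℕ) (h : (i : ℤ) = j + m) :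
    pdel dP dQ hm f i j h = f.extend i (j + 1) ≫ dQ j -
      (n.negOnePow : ℤ) • coboundary dP (Q j) i (f.extend · j) := by
  rw [extend_apply f (by push_cast; lia)]
  cases i with
  | zero => rfl
  | succ i => rw [coboundary_succ, extend_apply f (by push_cast at h; lia)]; rfl

lemma pdel_of_family (hm : m = n + 1) (s : ∀ i j, P i ⟶ Q j) (i j : ℕ) (h : (i : ℤ) = j + m) :
    pdel dP dQ hm (fun i j _ => s i j : DH P Q n) i j h =
      s i (j + 1) ≫ dQ j - (n.negOnePow : ℤ) • coboundary dP (Q j) i (s · j) := by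
  cases i <;> rfl

lemma extend_pdel (hm : m = n + 1) (f : DH P Q n) (i j : ℕ) :
    (pdel dP dQ hm f).extend i j = f.extend i (j + 1) ≫ dQ j -
      (n.negOnePow : ℤ) • coboundary dP (Q j) i (f.extend · j) := by
  by_cases h : (i : ℤ) = j + m
  · rw [extend_apply _ h, pdel_eq_extend]
  · rw [extend_of_ne _ h, extend_of_ne f (by push_cast; lia)]
    cases i with
    | zero => simp
    | succ i => simp [extend_of_ne f (show (i : ℤ) ≠ j + n by push_cast at h; lia)]

lemma pdel_comp_mem_range_coboundary {T : D} (hm : m = n + 1) (w : DH P Q n) {i j : ℕ}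
    (h : (i : ℤ) = j + m) {φ : Q j ⟶ T} (hφ : dQ j ≫ φ = 0) :
    pdel dP dQ hm w i j h ≫ φ ∈ (coboundary dP T i).range := by
  simp only [pdel_eq_extend, Preadditive.sub_comp, Category.assoc, hφ, comp_zero, zero_sub,
    Preadditive.zsmul_comp, coboundary_comp]
  exact neg_mem (zsmul_mem (AddMonoidHom.mem_range.2 ⟨_, rfl⟩) _)

lemma extend_sub_comp_of_pdel_eq (hm : m = n + 1) {g g' : DH P Q n}
    (h : pdel dP dQ hm g = pdel dP dQ hm g') (i j : ℕ) :
    (g - g').extend i (j + 1) ≫ dQ j =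
      (n.negOnePow : ℤ) • coboundary dP (Q j) i ((g - g').extend · j) := by
  have hsub : ((g - g').extend · j) = (g.extend · j) - (g'.extend · j) :=
    funext fun i => extend_sub g g' i j
  have hij := congrArg (fun f : DH P Q m => f.extend i j) h
  simp only [extend_pdel] at hij
  rw [hsub, map_sub, smul_sub, extend_sub, Preadditive.sub_comp]
  exact sub_eq_sub_iff_sub_eq_sub.1 hij

theorem exists_sub_eq_pdel {T : D} {μ : Q 0 ⟶ T} (hQ : IsResolution dQ μ)
    (hP : ∀ i, dP (i + 1) ≫ dP i = 0) (hproj : ∀ i, Projective (P i)) {p : ℤ}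
    (hn : n = p + 1) (hm : m = n + 1) {g g' : DH P Q n}
    (h : pdel dP dQ hm g = pdel dP dQ hm g')
    (hμ : ∀ k hk, g k 0 hk ≫ μ - g' k 0 hk ≫ μ ∈ (coboundary dP T k).range) :
    ∃ s : DH P Q p, g - g' = pdel dP dQ hn s := by
  have haug (i : ℕ) : (g - g').extend i 0 ≫ μ ∈ (coboundary dP T i).range := by
    by_cases hi : (i : ℤ) = (0 : ℕ) + n
    · simpa only [extend_apply _ hi, sub_apply, Preadditive.sub_comp] using hμ i hi
    · simpa only [extend_of_ne _ hi, zero_comp] using zero_mem _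
  obtain ⟨τ, hτ⟩ := exists_forall_coboundary_eq fun i => zsmul_mem (haug i) (n.negOnePow : ℤ)
  obtain ⟨s, hs⟩ := hQ.exists_nullHomotopy hP hproj n.negOnePow (g - g').extend τ
    (extend_sub_comp_of_pdel_eq hm h)
    fun i => by rw [hτ, smul_smul, ← Units.val_mul, Int.units_mul_self, Units.val_one, one_smul]
  refine ⟨fun i j _ => s i j, ?_⟩
  funext i j hij
  have hsign : (n.negOnePow : ℤ) = -p.negOnePow := by rw [hn, Int.negOnePow_succ, Units.val_neg]
  rw [pdel_of_family, hs, extend_apply _ hij, hsign, neg_smul, sub_neg_eq_add, add_sub_cancel_right]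

end DH

section HomotopyLifting

variable {D : Type*} [Category* D] [Abelian D] [MonoidalCategory D] {P : ℕ → D}
  {dP : ∀ i, P (i + 1) ⟶ P i}

lemma homotopicToUnit_iff_sub_mem_range_coboundary {k : ℕ} {u v : P k ⟶ 𝟙_ D} :
    homotopicToUnit P dP k u v ↔ u - v ∈ (coboundary dP (𝟙_ D) k).range := by
  cases k with
  | zero => simp [homotopicToUnit, sub_eq_zero, eq_comm]
  | succ k =>
    have hunfold : homotopicToUnit P dP (k + 1) u v ↔
        ∃ s : P k ⟶ 𝟙_ D, u - v = (-1 : ℤ) ^ (k + 1) • (dP k ≫ s) := by simp [homotopicToUnit]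
    simp only [hunfold, mem_range_coboundary_succ, ← Preadditive.comp_zsmul]
    refine ⟨fun ⟨s, hs⟩ => ⟨_, hs⟩, fun ⟨s, hs⟩ => ⟨(-1 : ℤ) ^ (k + 1) • s, ?_⟩⟩
    rw [smul_smul, ← mul_pow, neg_one_mul, neg_neg, one_pow, one_smul, hs]

theorem stmt7_general {μ : P 0 ⟶ 𝟙_ D} (hP : IsResolution dP μ) (hproj : ∀ i, Projective (P i))
    {Δ : ∀ i, P i ⟶ tOb P P i} {n : ℕ} {hn : 1 ≤ n} {f : P n ⟶ 𝟙_ D} (hf : dP n ≫ f = 0)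
    {ψf ψ'f : DH P P ((n : ℤ) - 1)} (h : IsHomotopyLifting P dP μ Δ n hn f ψf)
    (h' : IsHomotopyLifting P dP μ Δ n hn f ψ'f) :
    ∃ s : DH P P ((n : ℤ) - 2),
      ψf - ψ'f = pdel dP dP (show (n : ℤ) - 1 = ((n : ℤ) - 2) + 1 by ring) s := by
  obtain ⟨hψf, ψ, hψ, hμψ⟩ := h
  obtain ⟨hψ'f, ψ', hψ', hμψ'⟩ := h'
  rw [homotopicToUnit_iff_sub_mem_range_coboundary] at hμψ hμψ'
  obtain ⟨w, hw⟩ : ∃ w : DH P P (-2), ψ - ψ' = pdel dP dP (by norm_num) w :=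
    DH.exists_sub_eq_pdel hP hP.d_comp_d hproj (by norm_num) _ (hψ.trans hψ'.symm)
      fun k hk => by omega
  have hψψ' : ψ (n - 1) n (by omega) ≫ f - ψ' (n - 1) n (by omega) ≫ f ∈
      (coboundary dP (𝟙_ D) (n - 1)).range := by
    rw [← Preadditive.sub_comp, ← DH.sub_apply, hw]
    exact DH.pdel_comp_mem_range_coboundary _ w _ hf
  refine DH.exists_sub_eq_pdel hP hP.d_comp_d hproj _ _ (hψf.trans hψ'f.symm) fun k hk => ?_
  obtain rfl : k = n - 1 := by omega
  convert add_mem (sub_mem hμψ hμψ') (zsmul_mem hψψ' ((-1) ^ (n + 1))) using 1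
  rw [smul_sub]
  abel

end HomotopyLifting

theorem stmt7 (P : ℕ → C) (dP : ∀ i, P (i + 1) ⟶ P i)
    -- `(P, dP, μ)` is a projective resolution of `𝟙`
    (hPP : ∀ i, dP (i + 1) ≫ dP i = 0)
    (hproj : ∀ i, Projective (P i))
    (μ : P 0 ⟶ 𝟙_ C) (hμd : dP 0 ≫ μ = 0) (hepi : Epi μ)
    (hex0 : imageSubobject (dP 0) = kernelSubobject μ)
    (hex : ∀ i, imageSubobject (dP (i + 1)) = kernelSubobject (dP i))
    -- `Δ : P ⟶ P ⊗ P` is a morphism of resolutions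
    (Δ : ∀ i, P i ⟶ tOb P P i)
    (hΔd : ∀ i, Δ (i + 1) ≫ tD P dP i = dP i ≫ Δ i)
    (hΔμ : Δ 0 ≫ tAug P μ = μ)
    -- `f` is a degree `n` cocycle
    (n : ℕ) (hn : 1 ≤ n) (f : P n ⟶ 𝟙_ C) (hf : dP n ≫ f = 0)
    -- `ψf` and `ψ'f` are homotopy liftings of `(f, Δ)`
    (ψf ψ'f : DH P P ((n : ℤ) - 1))
    (h1 : IsHomotopyLifting P dP μ Δ n hn f ψf)
    (h2 : IsHomotopyLifting P dP μ Δ n hn f ψ'f) :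
    -- then `ψf ∼ ψ'f`, i.e. `ψf - ψ'f = ∂(s)` for a degree `n - 2` morphism `s`
    ∃ s : DH P P ((n : ℤ) - 2),
      ψf - ψ'f = pdel dP dP (show (n : ℤ) - 1 = ((n : ℤ) - 2) + 1 by ring) s :=
  stmt7_general
    ⟨hPP, hμd, hepi, (ShortComplex.exact_iff_image_eq_kernel _).2 hex0,
      fun i => (ShortComplex.exact_iff_image_eq_kernel _).2 (hex i)⟩
    hproj hf h1 h2
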